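/- arXiv:1810.08867 — 2 statements merged into one kernel-verified Lean document; each statement's English description precedes it below -/
import Mathlib

section
/- Let π be a discrete k-DPP on ground set [n] and fix element n. Let Ω_n (resp. Ω_n̄) be states containing (resp. not containing) n, with conditioned distributions π_n and π_n̄. For any subset A ⊆ Ω_n, the neighbor set N_n̄(A) = {y ∈ Ω_n̄ : ∃x ∈ A, |x∩y| = k−1, y = x − n + j for some j} satisfies π_n̄(N_n̄(A)) ≥ π_n(A). -/
open Finset

/-- Determinant of the principal submatrix of `L` indexed by the finite set `S`. -/
noncomputable def gramDet {m : ℕ} (L : Matrix (Fin m) (Fin m) ℝ)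
    (S : Finset (Fin m)) : ℝ :=
  Matrix.det (Matrix.of (fun i j : {x // x ∈ S} => L i.1 j.1))

/-!
If `M` is positive definite and all `ζ i` lie in an open half-plane bounded by a line through `0`,
then so do the eigenvalues of `diagonal ζ * M`, and by Gauss–Lucas no coefficient of its
characteristic polynomial vanishes. These coefficients are, up to sign, the sums of
`det M_S * ∏ i ∈ S, ζ i` over the sets `S` of a given size, so the generating polynomial of a
`k`-DPP with such a kernel has the half-plane property. Freeing only two of the variables leaves a
stable bilinear polynomial, whose discriminant inequality is negative correlation under every
external field, a closed condition that passes to positive semidefinite kernels. The Feder–Mihail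
induction upgrades this to negative association: for monotone `f`, the mean of `f S` given `e ∉ S`
is at least the mean of `f (S \ {e})` given `e ∈ S`. Vertex expansion is the case where `f`
indicates the up-set generated by the sets `x \ {e}`, `x ∈ A`: a state `y` avoiding `e` belongs to
it exactly when it is a neighbor of `A`.
-/

open Polynomial Matrix
open scoped ComplexOrder MatrixOrder Topology

section HalfPlane

lemma rootSet_iterate_derivative_subset_of_convex {K : Set ℂ} (hK : Convex ℝ K) {p : ℂ[X]}
    (hp : p.rootSet ℂ ⊆ K) (j : ℕ) : (derivative^[j] p).rootSet ℂ ⊆ K := by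
  induction j with
  | zero => exact hp
  | succ j ih =>
    rw [Function.iterate_succ_apply']
    rcases lt_or_ge 0 (derivative^[j] p).degree with hdeg | hdeg
    · exact (rootSet_derivative_subset_convexHull_rootSet hdeg).trans (convexHull_min ih hK)
    · rw [eq_C_of_degree_le_zero hdeg]
      simp

lemma coeff_ne_zero_of_rootSet_subset_convex {K : Set ℂ} (hK : Convex ℝ K) (h0K : 0 ∉ K)
    {p : ℂ[X]} (hp0 : p ≠ 0) (hp : p.rootSet ℂ ⊆ K) {j : ℕ} (hj : j ≤ p.natDegree) :
    p.coeff j ≠ 0 := by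
  intro hcoeff
  have hroot : (derivative^[j] p).IsRoot 0 := by
    rw [IsRoot, ← coeff_zero_eq_eval_zero, coeff_iterate_derivative]
    simp [hcoeff]
  have hne : derivative^[j] p ≠ 0 := by
    intro h
    have htop := congrArg (coeff · (p.natDegree - j)) h
    simp only [coeff_iterate_derivative, Nat.sub_add_cancel hj, coeff_zero, smul_eq_zero,
      Nat.descFactorial_eq_zero_iff_lt, coeff_natDegree, leadingCoeff_eq_zero] at htop
    exact htop.elim (by lia) hp0
  exact h0K (rootSet_iterate_derivative_subset_of_convex hK hp j
    (mem_rootSet.2 ⟨hne, by simpa using hroot⟩))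

lemma exists_halfPlane_of_im_pos {z w : ℂ} (hz : 0 < z.im) (hw : 0 < w.im) :
    ∃ φ : ℂ →ₗ[ℝ] ℝ, 0 < φ 1 ∧ 0 < φ z ∧ 0 < φ w := by
  let s : ℝ := |z.re| / z.im + |w.re| / w.im + 1
  have pos_of_slope {x : ℂ} (hx : 0 < x.im) (hs : |x.re| / x.im < s) : 0 < x.re + s * x.im := by
    linarith [(div_lt_iff₀ hx).1 hs, neg_abs_le x.re]
  have hz' : 0 ≤ |z.re| / z.im := by positivity
  have hw' : 0 ≤ |w.re| / w.im := by positivity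
  exact ⟨Complex.reLm + s • Complex.imLm, by simp,
    by simpa using pos_of_slope hz (by simp only [s]; linarith),
    by simpa using pos_of_slope hw (by simp only [s]; linarith)⟩

lemma mul_le_mul_of_bilinear_ne_zero {a b c d : ℝ}
    (h : ∀ z w : ℂ, 0 < z.im → 0 < w.im → (a : ℂ) + b * z + c * w + d * (z * w) ≠ 0) :
    d * a ≤ b * c := by
  by_contra! hlt
  have hcd : 0 < c ^ 2 + d ^ 2 := by
    by_contra! hle
    obtain rfl : c = 0 := by nlinarith [sq_nonneg c, sq_nonneg d]
    obtain rfl : d = 0 := by nlinarith [sq_nonneg d]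
    simp at hlt
  -- `w` solves the bilinear equation at `z = I`; its imaginary part is a multiple of `d a - b c`.
  let w : ℂ := ⟨-(a * c + b * d) / (c ^ 2 + d ^ 2), (d * a - b * c) / (c ^ 2 + d ^ 2)⟩
  refine h Complex.I w (by simp) (div_pos (by linarith) hcd) ?_
  apply Complex.ext <;> simp [w] <;> field_simp <;> ring

lemma posDef_map_ofReal {ι : Type*} [Finite ι] {L : Matrix ι ι ℝ} (hL : L.PosDef) :
    (L.map Complex.ofRealHom).PosDef := by
  classical
  have := Fintype.ofFinite ι
  obtain ⟨B, rfl⟩ := CStarAlgebra.nonneg_iff_eq_star_mul_self.1 hL.posSemidef.nonneg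
  have hB : IsUnit (B.map Complex.ofRealHom) :=
    (isUnit_of_mul_isUnit_right hL.isUnit).map Complex.ofRealHom.mapMatrix
  have hmap : (star B * B).map Complex.ofRealHom =
      (B.map Complex.ofRealHom)ᴴ * B.map Complex.ofRealHom := by
    rw [Matrix.map_mul]
    congr 1
    ext i j
    simp
  rw [hmap]
  exact PosDef.conjTranspose_mul_self _ (mulVec_injective_of_isUnit hB)

variable {ι : Type*} [Fintype ι] [DecidableEq ι]

-- If `ζ * (M x) = y x`, pairing with `v = M x` gives `⟨v, x⟩ y = ∑ |v i|² ζ i` with `⟨v, x⟩ > 0`.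
lemma halfPlane_of_isRoot_charpoly_diagonal_mul {M : Matrix ι ι ℂ} (hM : M.PosDef)
    (φ : ℂ →ₗ[ℝ] ℝ) {ζ : ι → ℂ} (hζ : ∀ i, 0 < φ (ζ i)) {y : ℂ}
    (hy : (diagonal ζ * M).charpoly.IsRoot y) : 0 < φ y := by
  rw [IsRoot, eval_charpoly] at hy
  obtain ⟨x, hx0, hx⟩ := exists_mulVec_eq_zero_iff.2 hy
  let v := M *ᵥ x
  have hyx (i : ι) : ζ i * v i = y * x i := by
    have hxi := congrFun hx i
    simp only [sub_mulVec, ← mulVec_mulVec, Pi.sub_apply, scalar_apply, mulVec_diagonal,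
      Pi.zero_apply] at hxi
    exact (sub_eq_zero.1 hxi).symm
  obtain ⟨q, hq, hqv⟩ : ∃ q : ℝ, 0 < q ∧ star v ⬝ᵥ x = q := by
    have hpos := hM.dotProduct_mulVec_pos hx0
    obtain ⟨q, hq, hqv⟩ := RCLike.pos_iff_exists_ofReal.1 hpos
    exact ⟨q, hq, by rw [star_dotProduct, ← hqv]; exact Complex.conj_ofReal q⟩
  obtain ⟨i₀, hi₀⟩ : ∃ i, v i ≠ 0 := by
    by_contra! hv
    exact hq.ne' (Complex.ofReal_eq_zero.1 (by simp [← hqv, dotProduct, hv]))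
  have hsum : q • y = ∑ i, Complex.normSq (v i) • ζ i := calc
    q • y = ∑ i, star (v i) * (y * x i) := by
      rw [Complex.real_smul, ← hqv, dotProduct, sum_mul]
      exact sum_congr rfl fun i _ => by simp only [Pi.star_apply]; ring
    _ = ∑ i, Complex.normSq (v i) • ζ i := sum_congr rfl fun i _ => by
      rw [← hyx, Complex.real_smul, Complex.normSq_eq_conj_mul_self, Complex.star_def]
      ring
  have hφ : 0 < q * φ y := by
    rw [← smul_eq_mul, ← map_smul, hsum, map_sum]
    simp only [map_smul, smul_eq_mul]
    exact sum_pos' (fun i _ => mul_nonneg (Complex.normSq_nonneg _) (hζ i).le)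
      ⟨i₀, mem_univ _, mul_pos (Complex.normSq_pos.2 hi₀) (hζ i₀)⟩
  exact pos_of_mul_pos_right hφ hq.le

lemma coeff_charpoly_diagonal_mul_ne_zero {M : Matrix ι ι ℂ} (hM : M.PosDef)
    (φ : ℂ →ₗ[ℝ] ℝ) {ζ : ι → ℂ} (hζ : ∀ i, 0 < φ (ζ i)) {j : ℕ} (hj : j ≤ Fintype.card ι) :
    (diagonal ζ * M).charpoly.coeff j ≠ 0 := by
  refine coeff_ne_zero_of_rootSet_subset_convex (convex_halfSpace_gt φ.isLinear 0) (by simp)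
    (charpoly_monic _).ne_zero (fun y hy => ?_) (by rwa [charpoly_natDegree_eq_dim])
  exact halfPlane_of_isRoot_charpoly_diagonal_mul hM φ hζ (by simpa using (mem_rootSet.1 hy).2)

/-- The half-plane property of a weight `u` on finite sets: its generating polynomial
`∑ S, u S ∏ i ∈ S, ζ i` does not vanish when all `ζ i` lie in a common open half-plane bounded by a
line through `0`. The half-plane is encoded as the positivity set of a real-linear functional. -/
def HasHalfPlaneProperty (u : Finset ι → ℝ) : Prop :=
  ∀ (φ : ℂ →ₗ[ℝ] ℝ) (ζ : ι → ℂ), (∀ i, 0 < φ (ζ i)) → ∑ S, (u S : ℂ) * ∏ i ∈ S, ζ i ≠ 0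

/-- The restriction of a weight on finite sets to the sets with `k` elements. The unnormalized
`k`-DPP with kernel `L` is `layer k` of the principal minors of `L`. -/
def layer (k : ℕ) (w : Finset ι → ℝ) (S : Finset ι) : ℝ :=
  if #S = k then w S else 0

/-- The principal minor `det L_S` of `L`, over an arbitrary index type. -/
noncomputable def principalMinor (L : Matrix ι ι ℝ) (S : Finset ι) : ℝ :=
  (L.submatrix (Subtype.val : S → ι) Subtype.val).det

lemma det_submatrix_diagonal_mul_map_ofReal (L : Matrix ι ι ℝ) (ζ : ι → ℂ) (S : Finset ι) :
    ((diagonal ζ * L.map Complex.ofRealHom).submatrix (Subtype.val : S → ι) Subtype.val).det =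
      principalMinor L S * ∏ i ∈ S, ζ i := by
  have hfactor : (diagonal ζ * L.map Complex.ofRealHom).submatrix (Subtype.val : S → ι)
      Subtype.val = diagonal (fun i : S => ζ i) *
        Complex.ofRealHom.mapMatrix (L.submatrix Subtype.val Subtype.val) := by
    ext i j
    simp [diagonal_mul]
  rw [hfactor, det_mul, det_diagonal, ← RingHom.map_det, prod_coe_sort S ζ, mul_comm]
  rfl

lemma hasHalfPlaneProperty_layer_principalMinor {L : Matrix ι ι ℝ} (hL : L.PosDef) {k : ℕ}
    (hk : k ≤ Fintype.card ι) : HasHalfPlaneProperty (layer k (principalMinor L)) := by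
  intro φ ζ hζ
  have hcoeff := coeff_charpoly_diagonal_mul_ne_zero (posDef_map_ofReal hL) φ hζ
    (Nat.sub_le (Fintype.card ι) k)
  rw [charpoly_coeff_eq_sum_minors _ k hk] at hcoeff
  convert right_ne_zero_of_mul hcoeff using 1
  rw [powersetCard_eq_filter, powerset_univ, sum_filter]
  refine sum_congr rfl fun S _ => ?_
  rw [det_submatrix_diagonal_mul_map_ofReal, layer]
  split_ifs <;> simp

end HalfPlane

section Rayleigh

variable {ι : Type*} [Fintype ι] [DecidableEq ι] {u : Finset ι → ℝ}

/-- Negative correlation of the events `e ∈ S` and `g ∈ S` for a random set `S` drawn with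
probability proportional to `u S`. The inequality `ℙ(e, g) ≤ ℙ(e) ℙ(g)` is written with the four
cells of the contingency table of `e` and `g`, which avoids normalizing. -/
def NegativelyCorrelated (u : Finset ι → ℝ) (e g : ι) : Prop :=
  (∑ S with e ∈ S ∧ g ∈ S, u S) * (∑ S with e ∉ S ∧ g ∉ S, u S) ≤
    (∑ S with e ∈ S ∧ g ∉ S, u S) * (∑ S with e ∉ S ∧ g ∈ S, u S)

/-- The Rayleigh property: distinct elements stay negatively correlated after `u` is tilted by any
positive external field `r`. -/
def IsRayleigh (u : Finset ι → ℝ) : Prop :=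
  ∀ r : ι → ℝ, (∀ i, 0 < r i) → ∀ e g, e ≠ g →
    NegativelyCorrelated (fun S => u S * ∏ i ∈ S, r i) e g

lemma HasHalfPlaneProperty.isRayleigh (hu : HasHalfPlaneProperty u) : IsRayleigh u := by
  intro r hr e g heg
  refine mul_le_mul_of_bilinear_ne_zero fun z w hz hw => ?_
  obtain ⟨φ, hφ1, hφz, hφw⟩ := exists_halfPlane_of_im_pos hz hw
  let ζ : ι → ℂ := fun i => r i • (Pi.mulSingle e z * Pi.mulSingle g w : ι → ℂ) i
  have hζ (i : ι) : 0 < φ (ζ i) := by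
    simp only [ζ, Pi.mul_apply, map_smul, smul_eq_mul]
    refine mul_pos (hr i) ?_
    rcases eq_or_ne i e with rfl | hie
    · simpa [Pi.mulSingle_eq_of_ne heg] using hφz
    · rcases eq_or_ne i g with rfl | hig
      · simpa [Pi.mulSingle_eq_of_ne hie] using hφw
      · simpa [Pi.mulSingle_eq_of_ne hie, Pi.mulSingle_eq_of_ne hig] using hφ1
  have hprod (S : Finset ι) : ∏ i ∈ S, ζ i =
      (∏ i ∈ S, r i : ℝ) * ((if e ∈ S then z else 1) * (if g ∈ S then w else 1)) := by
    simp only [ζ, Pi.mul_apply, Complex.real_smul, prod_mul_distrib, prod_pi_mulSingle',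
      Complex.ofReal_prod]
  convert hu φ ζ hζ using 1
  simp only [hprod, sum_filter, Complex.ofReal_sum, sum_mul, ← sum_add_distrib]
  refine sum_congr rfl fun S _ => ?_
  by_cases he : e ∈ S <;> by_cases hg : g ∈ S <;> simp [he, hg] <;> ring

lemma isClosed_setOf_isRayleigh : IsClosed {u : Finset ι → ℝ | IsRayleigh u} := by
  simp only [IsRayleigh, NegativelyCorrelated, Set.ofPred_forall]
  refine isClosed_iInter fun r => isClosed_iInter fun _ => isClosed_iInter fun e =>
    isClosed_iInter fun g => isClosed_iInter fun _ => isClosed_le ?_ ?_ <;> fun_prop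

lemma isRayleigh_of_continuous {γ : ℝ → Finset ι → ℝ} (hγ : Continuous γ)
    (hpos : ∀ t, 0 < t → IsRayleigh (γ t)) : IsRayleigh (γ 0) :=
  isClosed_setOf_isRayleigh.mem_of_tendsto ((hγ.tendsto 0).mono_left nhdsWithin_le_nhds)
    (eventually_mem_nhdsWithin.mono hpos : ∀ᶠ t in 𝓝[>] 0, IsRayleigh (γ t))

namespace IsRayleigh

lemma negativelyCorrelated (hu : IsRayleigh u) {e g : ι} (heg : e ≠ g) :
    NegativelyCorrelated u e g := by
  simpa using hu 1 (fun _ => one_pos) e g heg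

lemma const_mul (hu : IsRayleigh u) (c : ℝ) : IsRayleigh fun S => c * u S := by
  intro r hr e g heg
  have hscale := mul_le_mul_of_nonneg_left (hu r hr e g heg) (mul_self_nonneg c)
  simp only [NegativelyCorrelated, mul_assoc c, ← mul_sum]
  linarith

lemma mul_prod (hu : IsRayleigh u) {s : ι → ℝ} (hs : ∀ i, 0 < s i) :
    IsRayleigh fun S => u S * ∏ i ∈ S, s i := by
  intro r hr
  simpa only [mul_assoc, ← prod_mul_distrib] using
    hu (fun i => s i * r i) fun i => mul_pos (hs i) (hr i)

lemma mul_ite_of_pos (hu : IsRayleigh u) (g : ι) {a b : ℝ} (ha : 0 < a) (hb : 0 < b) :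
    IsRayleigh fun S => u S * if g ∈ S then a else b := by
  have hs (i : ι) : 0 < Pi.mulSingle (M := fun _ => ℝ) g (a / b) i := by
    rcases eq_or_ne i g with rfl | hig
    · simpa using div_pos ha hb
    · simp [Pi.mulSingle_eq_of_ne hig]
  convert (hu.mul_prod hs).const_mul b using 2 with S
  rw [prod_pi_mulSingle']
  split_ifs <;> field_simp

lemma mul_ite (hu : IsRayleigh u) (g : ι) {a b : ℝ} (ha : 0 ≤ a) (hb : 0 ≤ b) :
    IsRayleigh fun S => u S * if g ∈ S then a else b := by
  have hγ : Continuous fun t : ℝ => fun S : Finset ι => u S * if g ∈ S then a + t else b + t := by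
    refine continuous_pi fun S => continuous_const.mul ?_
    split_ifs <;> fun_prop
  simpa using isRayleigh_of_continuous hγ fun t ht => hu.mul_ite_of_pos g (by positivity)
    (by positivity)

lemma contraction (hu : IsRayleigh u) (g : ι) : IsRayleigh fun S => if g ∈ S then u S else 0 := by
  simpa using hu.mul_ite g zero_le_one le_rfl

lemma deletion (hu : IsRayleigh u) (g : ι) : IsRayleigh fun S => if g ∉ S then u S else 0 := by
  simpa using hu.mul_ite g le_rfl zero_le_one

end IsRayleigh

lemma isRayleigh_layer_principalMinor {L : Matrix ι ι ℝ} (hL : L.PosSemidef) (k : ℕ) :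
    IsRayleigh (layer k (principalMinor L)) := by
  rcases le_or_gt k (Fintype.card ι) with hk | hk
  · have hγ : Continuous fun t : ℝ => layer k (principalMinor (L + t • (1 : Matrix ι ι ℝ))) := by
      refine continuous_pi fun S => ?_
      unfold layer
      split_ifs
      · exact Continuous.matrix_det (by fun_prop)
      · exact continuous_const
    simpa using isRayleigh_of_continuous hγ fun t ht =>
      (hasHalfPlaneProperty_layer_principalMinor (PosDef.posSemidef_add hL (PosDef.one.smul ht))
        hk).isRayleigh
  · have hzero : layer k (principalMinor L) = 0 :=
      funext fun S => if_neg ((card_le_univ S).trans_lt hk).ne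
    simp [hzero, IsRayleigh, NegativelyCorrelated]

end Rayleigh

section FederMihail

lemma exists_mem_notMem_of_ne_of_card_eq {α : Type*} {S T : Finset α} (hne : S ≠ T)
    (hcard : #S = #T) : ∃ g ∈ S, g ∉ T :=
  not_subset.1 fun h => hne (eq_of_subset_of_card_le h hcard.ge)

lemma sum_filter_mul_eq_zero {α : Type*} [Fintype α] {v : α → ℝ} (hv : ∀ x, 0 ≤ v x)
    {p : α → Prop} [DecidablePred p] (h0 : ∑ x with p x, v x = 0) (F : α → ℝ) :
    ∑ x with p x, v x * F x = 0 :=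
  sum_eq_zero fun x hx => by rw [(sum_eq_zero_iff_of_nonneg fun x _ => hv x).1 h0 x hx, zero_mul]

lemma exists_ne_zero_of_sum_filter_ne_zero {α : Type*} [Fintype α] {v : α → ℝ} {p : α → Prop}
    [DecidablePred p] (h : ∑ x with p x, v x ≠ 0) : ∃ x, v x ≠ 0 ∧ p x := by
  obtain ⟨x, hx, hvx⟩ := exists_ne_zero_of_sum_ne_zero h
  exact ⟨x, hvx, (mem_filter_univ _).1 hx⟩

lemma support_ite_ssubset {α : Type*} {v : α → ℝ} {p : α → Prop} [DecidablePred p]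
    (h : ∃ x, v x ≠ 0 ∧ ¬ p x) :
    (Function.support fun x => if p x then v x else 0) ⊂ Function.support v := by
  obtain ⟨x, hx, hpx⟩ := h
  exact (Set.ssubset_iff_of_subset fun y hy => (ite_ne_right_iff.1 hy).2).2
    ⟨x, hx, fun h => hpx (ite_ne_right_iff.1 h).1⟩

variable {ι : Type*} [Fintype ι] [DecidableEq ι] {k : ℕ} {u : Finset ι → ℝ}

lemma sum_sum_mem_eq_mul_sum (huk : ∀ S, u S ≠ 0 → #S = k) :
    ∑ g, ∑ S with g ∈ S, u S = k * ∑ S, u S := by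
  simp only [sum_filter]
  rw [sum_comm, mul_sum]
  refine sum_congr rfl fun S _ => ?_
  rw [sum_ite_mem_eq, sum_const, nsmul_eq_mul]
  rcases eq_or_ne (u S) 0 with hS | hS
  · simp [hS]
  · rw [huk S hS]

-- The events `g ∈ S` have covariances with `F` that add up to `0`, as the number of events that
-- occur is the constant `k`.
lemma sum_mem_mul_sum_notMem_comm (huk : ∀ S, u S ≠ 0 → #S = k) (F : Finset ι → ℝ) :
    ∑ g, (∑ S with g ∉ S, u S * F S) * (∑ S with g ∈ S, u S) =
      ∑ g, (∑ S with g ∈ S, u S * F S) * (∑ S with g ∉ S, u S) := by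
  have hZ := sum_sum_mem_eq_mul_sum huk
  have hF := sum_sum_mem_eq_mul_sum (u := fun S => u S * F S) fun S hS =>
    huk S (left_ne_zero_of_mul hS)
  have hdiff (g : ι) : (∑ S with g ∉ S, u S * F S) * (∑ S with g ∈ S, u S) -
      (∑ S with g ∈ S, u S * F S) * (∑ S with g ∉ S, u S) =
      (∑ S, u S * F S) * (∑ S with g ∈ S, u S) -
        (∑ S with g ∈ S, u S * F S) * ∑ S, u S := by
    rw [← sum_filter_add_sum_filter_not univ (fun S => g ∈ S) u,
      ← sum_filter_add_sum_filter_not univ (fun S => g ∈ S) fun S => u S * F S]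
    ring
  rw [← sub_eq_zero, ← sum_sub_distrib, sum_congr rfl fun g _ => hdiff g, sum_sub_distrib,
    ← mul_sum, ← sum_mul, hZ, hF]
  ring

lemma exists_nonneg_covariance (hu₀ : ∀ S, 0 ≤ u S) (huk : ∀ S, u S ≠ 0 → #S = k)
    (hsupp : (Function.support u).Nontrivial) (F : Finset ι → ℝ) :
    ∃ g, 0 < ∑ S with g ∈ S, u S ∧ 0 < ∑ S with g ∉ S, u S ∧
      (∑ S with g ∉ S, u S * F S) * (∑ S with g ∈ S, u S) ≤
        (∑ S with g ∈ S, u S * F S) * (∑ S with g ∉ S, u S) := by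
  have hin (g : ι) : 0 ≤ ∑ S with g ∈ S, u S := sum_nonneg fun S _ => hu₀ S
  have hout (g : ι) : 0 ≤ ∑ S with g ∉ S, u S := sum_nonneg fun S _ => hu₀ S
  let free : Finset ι := {g | 0 < ∑ S with g ∈ S, u S ∧ 0 < ∑ S with g ∉ S, u S}
  have hfree : free.Nonempty := by
    obtain ⟨S, hS, T, hT, hST⟩ := hsupp
    obtain ⟨g, hgS, hgT⟩ :=
      exists_mem_notMem_of_ne_of_card_eq hST ((huk S hS).trans (huk T hT).symm)
    refine ⟨g, mem_filter_univ _ |>.2 ⟨?_, ?_⟩⟩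
    · exact sum_pos' (fun S _ => hu₀ S) ⟨S, by simpa using hgS, (hu₀ S).lt_of_ne' hS⟩
    · exact sum_pos' (fun S _ => hu₀ S) ⟨T, by simpa using hgT, (hu₀ T).lt_of_ne' hT⟩
  have hfrozen {g : ι} (hg : g ∉ free) :
      ∑ S with g ∈ S, u S = 0 ∨ ∑ S with g ∉ S, u S = 0 := by
    by_contra! h
    exact hg (mem_filter_univ _ |>.2 ⟨(hin g).lt_of_ne' h.1, (hout g).lt_of_ne' h.2⟩)
  have hrestrict : ∑ g ∈ free, (∑ S with g ∉ S, u S * F S) * (∑ S with g ∈ S, u S) =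
      ∑ g ∈ free, (∑ S with g ∈ S, u S * F S) * (∑ S with g ∉ S, u S) := by
    rw [sum_subset (subset_univ free), sum_subset (subset_univ free),
      sum_mem_mul_sum_notMem_comm huk]
    all_goals
      intro g _ hg
      rcases hfrozen hg with h | h <;> simp [h, sum_filter_mul_eq_zero hu₀ h]
  obtain ⟨g, hg, hcov⟩ := exists_le_of_sum_le hfree hrestrict.le
  exact ⟨g, (mem_filter_univ _ |>.1 hg).1, (mem_filter_univ _ |>.1 hg).2, hcov⟩

-- With `a`, `b` the conditional means of `f` given `e ∉ S` and, respectively, `g ∈ S` or `g ∉ S`,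
-- the gap between the two sides is at least `(a - b) (Z₀ᵢ Z₁ₒ - Z₁ᵢ Z₀ₒ)`.
lemma add_mul_add_le_of_conditional {F₁ᵢ F₁ₒ F₀ᵢ F₀ₒ Z₁ᵢ Z₁ₒ Z₀ᵢ Z₀ₒ : ℝ}
    (hZ₀ᵢ : 0 < Z₀ᵢ) (hZ₀ₒ : 0 < Z₀ₒ)
    (hᵢ : F₁ᵢ * Z₀ᵢ ≤ F₀ᵢ * Z₁ᵢ) (hₒ : F₁ₒ * Z₀ₒ ≤ F₀ₒ * Z₁ₒ)
    (hneg : Z₁ᵢ * Z₀ₒ ≤ Z₁ₒ * Z₀ᵢ) (hcov : F₀ₒ * Z₀ᵢ ≤ F₀ᵢ * Z₀ₒ) :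
    (F₁ᵢ + F₁ₒ) * (Z₀ᵢ + Z₀ₒ) ≤ (F₀ᵢ + F₀ₒ) * (Z₁ᵢ + Z₁ₒ) := by
  obtain ⟨a, rfl⟩ : ∃ a, F₀ᵢ = a * Z₀ᵢ := ⟨F₀ᵢ / Z₀ᵢ, by field_simp⟩
  obtain ⟨b, rfl⟩ : ∃ b, F₀ₒ = b * Z₀ₒ := ⟨F₀ₒ / Z₀ₒ, by field_simp⟩
  have hF₁ᵢ : F₁ᵢ ≤ a * Z₁ᵢ := le_of_mul_le_mul_right (by linarith) hZ₀ᵢ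
  have hF₁ₒ : F₁ₒ ≤ b * Z₁ₒ := le_of_mul_le_mul_right (by linarith) hZ₀ₒ
  have hba : b ≤ a := le_of_mul_le_mul_right (by linarith) (mul_pos hZ₀ᵢ hZ₀ₒ)
  calc (F₁ᵢ + F₁ₒ) * (Z₀ᵢ + Z₀ₒ) ≤ (a * Z₁ᵢ + b * Z₁ₒ) * (Z₀ᵢ + Z₀ₒ) := by gcongr
    _ ≤ (a * Z₀ᵢ + b * Z₀ₒ) * (Z₁ᵢ + Z₁ₒ) := by
      linarith [mul_nonneg (sub_nonneg.2 hba) (sub_nonneg.2 hneg)]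

namespace IsRayleigh

lemma erase_subset_of_support_avoiding_singleton (hu₀ : ∀ S, 0 ≤ u S) (hu : IsRayleigh u)
    {e : ι} {T S : Finset ι} (hT : u T ≠ 0) (heT : e ∉ T)
    (huniq : ∀ T', u T' ≠ 0 → e ∉ T' → T' = T) (hS : u S ≠ 0) (heS : e ∈ S) :
    S.erase e ⊆ T := by
  intro g hg
  obtain ⟨hge, hgS⟩ := mem_erase.1 hg
  by_contra hgT
  have hboth : 0 < ∑ S with e ∈ S ∧ g ∈ S, u S :=
    sum_pos' (fun S _ => hu₀ S) ⟨S, by simp [heS, hgS], (hu₀ S).lt_of_ne' hS⟩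
  have hneither : 0 < ∑ S with e ∉ S ∧ g ∉ S, u S :=
    sum_pos' (fun S _ => hu₀ S) ⟨T, by simp [heT, hgT], (hu₀ T).lt_of_ne' hT⟩
  have honly : ∑ S with e ∉ S ∧ g ∈ S, u S = 0 := sum_eq_zero fun T' hT' => by
    obtain ⟨heT', hgT'⟩ := (mem_filter_univ _).1 hT'
    by_contra h
    exact hgT (huniq T' h heT' ▸ hgT')
  have hneg := hu.negativelyCorrelated hge.symm
  rw [NegativelyCorrelated, honly, mul_zero] at hneg
  exact (mul_pos hboth hneither).not_ge hneg

lemma feder_mihail_of_subsingleton (hu₀ : ∀ S, 0 ≤ u S) (hu : IsRayleigh u)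
    {f : Finset ι → ℝ} (hf : Monotone f) {e : ι}
    (hsub : (Function.support fun S => if e ∉ S then u S else 0).Subsingleton) :
    (∑ S with e ∈ S, u S * f (S.erase e)) * (∑ S with e ∉ S, u S) ≤
      (∑ S with e ∉ S, u S * f S) * (∑ S with e ∈ S, u S) := by
  by_cases hT : ∃ T, u T ≠ 0 ∧ e ∉ T
  · obtain ⟨T, hT, heT⟩ := hT
    have huniq (T' : Finset ι) (hT' : u T' ≠ 0) (heT' : e ∉ T') : T' = T :=
      hsub (by simp [hT', heT']) (by simp [hT, heT])
    have hF₀ : ∑ S with e ∉ S, u S * f S = (∑ S with e ∉ S, u S) * f T := by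
      rw [sum_mul]
      refine sum_congr rfl fun S hS => ?_
      rcases eq_or_ne (u S) 0 with h | h
      · simp [h]
      · rw [huniq S h (by simpa using hS)]
    have hF₁ : ∑ S with e ∈ S, u S * f (S.erase e) ≤ (∑ S with e ∈ S, u S) * f T := by
      rw [sum_mul]
      refine sum_le_sum fun S hS => ?_
      rcases eq_or_ne (u S) 0 with h | h
      · simp [h]
      · exact mul_le_mul_of_nonneg_left (hf (hu.erase_subset_of_support_avoiding_singleton hu₀ hT
          heT huniq h (by simpa using hS))) (hu₀ S)
    have hZ₀ : 0 ≤ ∑ S with e ∉ S, u S := sum_nonneg fun S _ => hu₀ S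
    rw [hF₀]
    linarith [mul_le_mul_of_nonneg_right hF₁ hZ₀]
  · push Not at hT
    have hzero : ∑ S with e ∉ S, u S = 0 := sum_eq_zero fun S hS => by
      by_contra h
      exact (mem_filter_univ _).1 hS (hT S h)
    rw [hzero, sum_filter_mul_eq_zero hu₀ hzero]
    simp

theorem feder_mihail (hu₀ : ∀ S, 0 ≤ u S) (huk : ∀ S, u S ≠ 0 → #S = k) (hu : IsRayleigh u)
    {f : Finset ι → ℝ} (hf : Monotone f) (e : ι) :
    (∑ S with e ∈ S, u S * f (S.erase e)) * (∑ S with e ∉ S, u S) ≤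
      (∑ S with e ∉ S, u S * f S) * (∑ S with e ∈ S, u S) := by
  induction hs : Function.support u using WellFoundedLT.induction generalizing u with
  | ind s ih =>
  subst hs
  rcases Set.subsingleton_or_nontrivial (Function.support fun S => if e ∉ S then u S else 0) with
    hsub | hnontriv
  · exact hu.feder_mihail_of_subsingleton hu₀ hf hsub
  obtain ⟨g, hgᵢ, hgₒ, hcov⟩ := exists_nonneg_covariance
    (u := fun S => if e ∉ S then u S else 0) (fun S => ite_nonneg (hu₀ S) le_rfl)
    (fun S hS => huk S (ite_ne_right_iff.1 hS).2) hnontriv f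
  simp only [ite_mul, zero_mul, ← sum_filter, filter_filter, and_comm (b := e ∉ _)]
    at hgᵢ hgₒ hcov
  obtain ⟨S, huS, -, hgS⟩ := exists_ne_zero_of_sum_filter_ne_zero hgᵢ.ne'
  obtain ⟨T, huT, -, hgT⟩ := exists_ne_zero_of_sum_filter_ne_zero hgₒ.ne'
  have heg : e ≠ g := by
    rintro rfl
    simp at hgᵢ
  have hin := ih _ (support_ite_ssubset ⟨T, huT, hgT⟩)
    (fun S => ite_nonneg (hu₀ S) le_rfl) (fun S hS => huk S (ite_ne_right_iff.1 hS).2)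
    (hu.contraction g) rfl
  have hout := ih _ (support_ite_ssubset (p := (g ∉ ·)) ⟨S, huS, not_not.2 hgS⟩)
    (fun S => ite_nonneg (hu₀ S) le_rfl) (fun S hS => huk S (ite_ne_right_iff.1 hS).2)
    (hu.deletion g) rfl
  simp only [ite_mul, zero_mul, ← sum_filter, filter_filter] at hin hout
  have hsplit (p : Finset ι → Prop) [DecidablePred p] (F : Finset ι → ℝ) :
      ∑ S with p S, F S = ∑ S with p S ∧ g ∈ S, F S + ∑ S with p S ∧ g ∉ S, F S := by
    simp only [← filter_filter, sum_filter_add_sum_filter_not]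
  simp only [hsplit (e ∈ ·), hsplit (e ∉ ·)]
  exact add_mul_add_le_of_conditional hgᵢ hgₒ hin hout (hu.negativelyCorrelated heg) hcov

end IsRayleigh
end FederMihail

section VertexExpansion

variable {ι : Type*}

lemma sum_filter_layer [Fintype ι] (k : ℕ) (w : Finset ι → ℝ) (p : Finset ι → Prop)
    [DecidablePred p] : ∑ S with p S, layer k w S = ∑ S with #S = k ∧ p S, w S := by
  simp only [layer, ← sum_filter, filter_filter, and_comm]

variable [DecidableEq ι]

lemma erase_subset_erase_iff_eq {x y : Finset ι} {e : ι} (hcard : #x = #y) (hx : e ∈ x)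
    (hy : e ∈ y) : x.erase e ⊆ y.erase e ↔ x = y := by
  refine ⟨fun h => ?_, fun h => h ▸ Subset.rfl⟩
  have herase : x.erase e = y.erase e := eq_of_subset_of_card_le h (by
    rw [card_erase_of_mem hx, card_erase_of_mem hy, hcard])
  rw [← insert_erase hx, herase, insert_erase hy]

lemma card_inter_eq_card_sub_one_iff {x y : Finset ι} {e : ι} (hx : e ∈ x) (hy : e ∉ y) :
    #(x ∩ y) = #x - 1 ↔ x.erase e ⊆ y := by
  have hinter : x ∩ y = x.erase e ∩ y := by
    rw [erase_inter, erase_eq_of_notMem (mt mem_of_mem_inter_right hy)]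
  rw [← card_erase_of_mem hx, hinter, ← inter_eq_left]
  exact ⟨fun h => eq_of_subset_of_card_le inter_subset_left h.ge, congrArg card⟩

/-- The indicator of the up-set generated by the sets `x \ {e}` with `x ∈ A`: the monotone event
to which negative association is applied. -/
def eraseUpIndicator (A : Finset (Finset ι)) (e : ι) (T : Finset ι) : ℝ :=
  if ∃ x ∈ A, x.erase e ⊆ T then 1 else 0

lemma monotone_eraseUpIndicator (A : Finset (Finset ι)) (e : ι) :
    Monotone (eraseUpIndicator A e) := by
  intro S T hST
  unfold eraseUpIndicator
  split_ifs with hS hT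
  · rfl
  · exact absurd (hS.imp fun x hx => ⟨hx.1, hx.2.trans hST⟩) hT
  · exact zero_le_one
  · rfl

variable [Fintype ι] {k : ℕ} {A : Finset (Finset ι)} {e : ι}

lemma sum_layer_mul_eraseUpIndicator_erase (hA : ∀ x ∈ A, #x = k ∧ e ∈ x) (w : Finset ι → ℝ) :
    ∑ S with e ∈ S, layer k w S * eraseUpIndicator A e (S.erase e) = ∑ x ∈ A, w x := by
  simp only [layer, eraseUpIndicator, mul_ite, mul_one, mul_zero, ← sum_filter, filter_filter,
    ← ite_and]
  refine sum_congr (ext fun S => ?_) fun _ _ => rfl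
  simp only [mem_filter_univ]
  constructor
  · rintro ⟨heS, ⟨x, hx, hxS⟩, hS⟩
    rwa [← (erase_subset_erase_iff_eq ((hA x hx).1.trans hS.symm) (hA x hx).2 heS).1 hxS]
  · exact fun hS => ⟨(hA S hS).2, ⟨S, hS, Subset.rfl⟩, (hA S hS).1⟩

lemma sum_layer_mul_eraseUpIndicator (hA : ∀ x ∈ A, #x = k ∧ e ∈ x) (w : Finset ι → ℝ) :
    ∑ S with e ∉ S, layer k w S * eraseUpIndicator A e S =
      ∑ y with #y = k ∧ e ∉ y ∧ ∃ x ∈ A, #(x ∩ y) = k - 1, w y := by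
  simp only [layer, eraseUpIndicator, mul_ite, mul_one, mul_zero, ← sum_filter, filter_filter,
    ← ite_and]
  refine sum_congr (ext fun y => ?_) fun _ _ => rfl
  simp only [mem_filter_univ]
  have hnbr (hey : e ∉ y) :
      (∃ x ∈ A, x.erase e ⊆ y) ↔ ∃ x ∈ A, #(x ∩ y) = k - 1 :=
    exists_congr fun x => and_congr_right fun hx => by
      rw [← (hA x hx).1, card_inter_eq_card_sub_one_iff (hA x hx).2 hey]
  constructor
  · exact fun ⟨hey, hx, hy⟩ => ⟨hy, hey, (hnbr hey).1 hx⟩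
  · exact fun ⟨hy, hey, hx⟩ => ⟨hey, (hnbr hey).2 hx, hy⟩

theorem dpp_vertex_expansion_general {w : Finset ι → ℝ} (hw₀ : ∀ S, 0 ≤ w S)
    (hw : IsRayleigh (layer k w))
    (hZe : 0 < ∑ S with #S = k ∧ e ∈ S, w S) (hZne : 0 < ∑ S with #S = k ∧ e ∉ S, w S)
    (hA : ∀ x ∈ A, #x = k ∧ e ∈ x) :
    (∑ x ∈ A, w x) / (∑ S with #S = k ∧ e ∈ S, w S) ≤
      (∑ y with #y = k ∧ e ∉ y ∧ ∃ x ∈ A, #(x ∩ y) = k - 1, w y) /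
        (∑ S with #S = k ∧ e ∉ S, w S) := by
  rw [div_le_div_iff₀ hZe hZne, ← sum_layer_mul_eraseUpIndicator_erase hA,
    ← sum_layer_mul_eraseUpIndicator hA, ← sum_filter_layer, ← sum_filter_layer]
  exact hw.feder_mihail (fun S => ite_nonneg (hw₀ S) le_rfl)
    (fun S hS => (ite_ne_right_iff.1 hS).1) (monotone_eraseUpIndicator A e) e

end VertexExpansion

/-- **Vertex expansion from negative association.** For a discrete `k`-DPP `π` with
PSD kernel `L` on `[n]`, a fixed element `e`, and any set `A` of size-`k` states
containing `e`, the neighbor set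
`N_ē(A) = {y : |y| = k, e ∉ y, ∃ x ∈ A, |x ∩ y| = k−1}` satisfies
`π_ē(N_ē(A)) ≥ π_e(A)`, where `π_e`, `π_ē` are `π` conditioned on containing,
respectively not containing, `e`. -/
theorem dpp_vertex_expansion {n k : ℕ} (hk : 1 ≤ k) (hkn : k ≤ n)
    (L : Matrix (Fin n) (Fin n) ℝ) (hL : L.PosSemidef) (e : Fin n)
    (hZe : 0 < ∑ S ∈ univ.filter (fun S : Finset (Fin n) => S.card = k ∧ e ∈ S),
      gramDet L S)
    (hZne : 0 < ∑ S ∈ univ.filter (fun S : Finset (Fin n) => S.card = k ∧ e ∉ S),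
      gramDet L S)
    (A : Finset (Finset (Fin n))) (hA : ∀ x ∈ A, x.card = k ∧ e ∈ x) :
    (∑ y ∈ univ.filter (fun y : Finset (Fin n) =>
          y.card = k ∧ e ∉ y ∧ ∃ x ∈ A, (x ∩ y).card = k - 1), gramDet L y)
        / (∑ S ∈ univ.filter (fun S : Finset (Fin n) => S.card = k ∧ e ∉ S),
            gramDet L S)
      ≥ (∑ x ∈ A, gramDet L x)
          / (∑ S ∈ univ.filter (fun S : Finset (Fin n) => S.card = k ∧ e ∈ S),
              gramDet L S) := by
  exact dpp_vertex_expansion_general (fun S => (hL.submatrix _).det_nonneg)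
    (isRayleigh_layer_principalMinor hL k) hZe hZne hA
end

section
/- Let L be a continuous PSD kernel on a closed domain C ⊆ ℝ^d and let ν be the distribution of the output of the randomized greedy algorithm that, for i = 0,…,k−1, samples x_{i+1} from the conditional distribution with density proportional to det_L(x₁,…,x_i,y) in y. Then for every k-subset {x₁,…,x_k} ⊆ C, the density satisfies f_ν(x₁,…,x_k) ≤ (k!)² · f_π(x₁,…,x_k), where π is the k-DPP defined by L. -/
open MeasureTheory

/-- Gram determinant `det_L(x₁,…,x_m)` of a tuple of points under kernel `L`. -/
noncomputable def detL {E : Type*} (L : E → E → ℝ) {m : ℕ} (x : Fin m → E) : ℝ :=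
  Matrix.det (Matrix.of (fun i j : Fin m => L (x i) (x j)))

/-- The first `m` entries of a `k`-tuple. -/
def prefixTuple {E : Type*} {k : ℕ} (x : Fin k → E) (m : ℕ) (h : m ≤ k) :
    Fin m → E :=
  fun j => x ⟨j.1, lt_of_lt_of_le j.2 h⟩

/-!
Conditioning the kernel `K` on a point `p` splits it as `K = R + (K p p)⁻¹ K(·, p) K(p, ·)` with `R`
again positive semidefinite. By the matrix determinant lemma `det_K z` is `det_R z` plus a quadratic
form in the adjugate of the Gram matrix of `R`. The adjugate is positive semidefinite, so a factor
`n + 1`, the size of the matrix, bounds this form by its diagonal part, whose coefficients are the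
determinants `det_R` of `z` with one point removed. As `det_R z` is itself at most a diagonal entry
times such a determinant, integrating term by term gives
`∫ det_K ≤ (n + 1)² (∫ K y y) (∫ det_R)`. The greedy density of `K` started at `p` is
`K p p / ∫ K y y` times the greedy density of `R`, and induction yields the factor `(k!)²` for each
of the `k!` orderings.
-/

open Matrix

section Matrix

open Polynomial
open scoped MatrixOrder

variable {ι R : Type*}

theorem det_add_vecMulVec_of_isRegular [Fintype ι] [DecidableEq ι] [CommRing R]
    {A : Matrix ι ι R} (hA : IsRegular A.det) (u v : ι → R) :
    (A + vecMulVec u v).det = A.det + v ⬝ᵥ A.adjugate *ᵥ u := by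
  apply hA.left
  have hmul : fromBlocks 1 0 (replicateRow Unit v * A.adjugate) (A.det • (1 : Matrix Unit Unit R))
        * fromBlocks A (replicateCol Unit u) (-replicateRow Unit v) 1
      = fromBlocks A (replicateCol Unit u) 0
        (replicateRow Unit v * A.adjugate * replicateCol Unit u + A.det • 1) := by
    simp [fromBlocks_multiply, Matrix.mul_assoc, adjugate_mul]
  have hdet := congrArg Matrix.det hmul
  rw [← replicateRow_vecMul] at hdet
  simpa [vecMulVec_eq Unit, dotProduct_mulVec, add_comm] using hdet

theorem det_add_vecMulVec [Fintype ι] [DecidableEq ι] [CommRing R] (A : Matrix ι ι R)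
    (u v : ι → R) : (A + vecMulVec u v).det = A.det + v ⬝ᵥ A.adjugate *ᵥ u := by
  -- `X • 1 + A` has monic determinant and specializes to `A` at `X = 0`.
  let P : Matrix ι ι R[X] := (X : R[X]) • 1 + A.map C
  have hP : IsRegular P.det := Monic.isRegular (leadingCoeff_det_X_one_add_C A)
  have hP_eval : (evalRingHom 0).mapMatrix P = A := by
    ext i j
    simp [P, Matrix.one_apply, apply_ite]
  have hC_eval (w : ι → R) : evalRingHom 0 ∘ C ∘ w = w := by
    ext i
    simp
  have huv_eval : (evalRingHom 0).mapMatrix (vecMulVec (C ∘ u) (C ∘ v)) = vecMulVec u v := by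
    ext i j
    simp [vecMulVec_apply]
  have hadj_eval : evalRingHom 0 ∘ (P.adjugate *ᵥ (C ∘ u)) = A.adjugate *ᵥ u := by
    ext i
    rw [Function.comp_apply, RingHom.map_mulVec, ← RingHom.mapMatrix_apply,
      RingHom.map_adjugate, hP_eval, hC_eval]
  have h := congrArg (evalRingHom 0) (det_add_vecMulVec_of_isRegular hP (C ∘ u) (C ∘ v))
  rwa [map_add, RingHom.map_det, RingHom.map_det, map_add, hP_eval, huv_eval,
    RingHom.map_dotProduct, hC_eval, hadj_eval] at h

open scoped ComplexOrder in
theorem posSemidef_adjugate [Fintype ι] [DecidableEq ι] {𝕜 : Type*} [RCLike 𝕜] {A : Matrix ι ι 𝕜}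
    (hA : A.PosSemidef) : A.adjugate.PosSemidef := by
  obtain ⟨B, rfl⟩ := CStarAlgebra.nonneg_iff_eq_star_mul_self.mp hA.nonneg
  rw [star_eq_conjTranspose, adjugate_mul_distrib, ← adjugate_conjTranspose]
  exact posSemidef_self_mul_conjTranspose _

theorem posSemidef_of_forall_fin_submatrix [Ring R] [PartialOrder R] [StarRing R]
    {A : Matrix ι ι R} (hA : ∀ (m : ℕ) (x : Fin m → ι), (A.submatrix x x).PosSemidef) :
    A.PosSemidef := by
  classical
  refine ⟨?_, fun v ↦ ?_⟩
  · ext i j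
    simpa using (hA 2 ![i, j]).isHermitian.apply 0 1
  · have hsupp : (A.submatrix ((↑) : v.support → ι) (↑)).PosSemidef := by
      simpa [Function.comp_def] using
        (hA _ fun i ↦ (v.support.equivFin.symm i : ι)).submatrix v.support.equivFin
    simpa [Finsupp.sum, ← Finset.sum_attach v.support, ← Finset.subtype_mem_eq_attach,
      ← Finsupp.subtypeDomain_apply, ← Finsupp.support_subtypeDomain]
      using hsupp.2 _

theorem dotProduct_mulVec_le_card_mul_sum [Fintype ι] {A : Matrix ι ι ℝ} (hA : A.PosSemidef)
    (v : ι → ℝ) : v ⬝ᵥ A *ᵥ v ≤ Fintype.card ι * ∑ i, v i ^ 2 * A i i := by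
  classical
  obtain ⟨B, rfl⟩ := CStarAlgebra.nonneg_iff_eq_star_mul_self.mp hA.nonneg
  calc v ⬝ᵥ (star B * B) *ᵥ v = ∑ j, (∑ i, v i * B j i) ^ 2 := by
        rw [star_eq_conjTranspose, conjTranspose_eq_transpose_of_trivial, ← mulVec_mulVec,
          dotProduct_mulVec, vecMul_transpose]
        simp [dotProduct, mulVec, sq, mul_comm]
    _ ≤ ∑ j, Fintype.card ι * ∑ i, (v i * B j i) ^ 2 := by
        gcongr with j
        exact sq_sum_le_card_mul_sum_sq
    _ = Fintype.card ι * ∑ i, v i ^ 2 * (star B * B) i i := by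
        rw [← Finset.mul_sum, Finset.sum_comm]
        simp [mul_apply, Finset.mul_sum, sq, mul_mul_mul_comm]

end Matrix

/-- The kernel `K` conditioned on `p`: the Schur complement of the entry `K p p`, which up to
normalization is the kernel of the point process of `K` given that `p` is a point of it. It is
meant for `K p p ≠ 0`; division by zero makes it `K` itself when `K p p = 0`. -/
noncomputable def condKernel {E : Type*} (K : E → E → ℝ) (p : E) : E → E → ℝ :=
  fun y z ↦ K y z - K y p * K p z / K p p

section Kernel

variable {E : Type*} {K : E → E → ℝ} {p : E}

theorem kernel_comm (hK : (Matrix.of K).PosSemidef) (y z : E) : K y z = K z y := by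
  simpa using hK.isHermitian.apply z y

theorem kernel_self_nonneg (hK : (Matrix.of K).PosSemidef) (y : E) : 0 ≤ K y y :=
  hK.diag_nonneg (i := y)

theorem detL_nonneg (hK : (Matrix.of K).PosSemidef) {m : ℕ} (x : Fin m → E) : 0 ≤ detL K x :=
  (hK.submatrix x).det_nonneg

theorem detL_one (K : E → E → ℝ) (x : Fin 1 → E) : detL K x = K (x 0) (x 0) := by
  simp [detL]

theorem detL_comp_perm (K : E → E → ℝ) {m : ℕ} (x : Fin m → E) (σ : Equiv.Perm (Fin m)) :
    detL K (x ∘ σ) = detL K x :=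
  det_submatrix_equiv_self σ (Matrix.of fun i j ↦ K (x i) (x j))

theorem of_submatrix_sumElim_eq_fromBlocks (K : E → E → ℝ) (p : E) {ι : Type*} (w : ι → E) :
    (Matrix.of K).submatrix (Sum.elim w fun _ : Unit ↦ p) (Sum.elim w fun _ : Unit ↦ p) =
      fromBlocks (Matrix.of fun i j ↦ K (w i) (w j)) (replicateCol Unit fun i ↦ K (w i) p)
        (replicateRow Unit fun j ↦ K p (w j)) (diagonal fun _ ↦ K p p) := by
  ext (i | i) (j | j) <;> simp

theorem of_condKernel_eq_sub {ι : Type*} (w : ι → E) :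
    (Matrix.of fun i j ↦ condKernel K p (w i) (w j)) = (Matrix.of fun i j ↦ K (w i) (w j)) -
      replicateCol Unit (fun i ↦ K (w i) p) * (diagonal fun _ : Unit ↦ K p p)⁻¹ *
        replicateRow Unit fun j ↦ K p (w j) := by
  ext i j
  simp [condKernel, mul_apply, inv_subsingleton, div_eq_mul_inv, mul_right_comm]

theorem detL_cons (hp : K p p ≠ 0) {m : ℕ} (w : Fin m → E) :
    detL K (Fin.cons p w : Fin (m + 1) → E) = K p p * detL (condKernel K p) w := by
  let e : Fin (m + 1) ≃ Fin m ⊕ Unit := (finSuccEquiv m).trans (Equiv.optionEquivSumPUnit _)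
  let D : Matrix Unit Unit ℝ := diagonal fun _ ↦ K p p
  have hcons : (Fin.cons p w : Fin (m + 1) → E) = Sum.elim w (fun _ : Unit ↦ p) ∘ e := by
    ext i
    refine Fin.cases ?_ (fun i ↦ ?_) i <;> simp [e]
  have : Invertible D := D.invertibleOfIsUnitDet (by simpa [D] using hp)
  calc detL K (Fin.cons p w : Fin (m + 1) → E)
      = (((Matrix.of K).submatrix (Sum.elim w fun _ ↦ p) (Sum.elim w fun _ ↦ p)).submatrix
          e e).det := by rw [hcons]; rfl
    _ = K p p * detL (condKernel K p) w := by
      rw [det_submatrix_equiv_self, of_submatrix_sumElim_eq_fromBlocks, det_fromBlocks₂₂,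
        invOf_eq_nonsing_inv, ← of_condKernel_eq_sub]
      simp [detL]

theorem posSemidef_condKernel (hK : (Matrix.of K).PosSemidef) (hp : 0 < K p p) :
    (Matrix.of (condKernel K p)).PosSemidef := by
  refine posSemidef_of_forall_fin_submatrix fun m x ↦ ?_
  let D : Matrix Unit Unit ℝ := diagonal fun _ ↦ K p p
  have hD : D.PosDef := PosDef.diagonal fun _ ↦ hp
  have : Invertible D := hD.isUnit.invertible
  have hrow : (replicateRow Unit fun j ↦ K p (x j)) = (replicateCol Unit fun i ↦ K (x i) p)ᴴ := by
    ext i j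
    simp [kernel_comm hK p]
  have hblock := hK.submatrix (Sum.elim x fun _ : Unit ↦ p)
  rw [of_submatrix_sumElim_eq_fromBlocks, hrow, hD.fromBlocks₂₂, ← hrow,
    ← of_condKernel_eq_sub] at hblock
  exact hblock

theorem condKernel_self_le (hK : (Matrix.of K).PosSemidef) (p y : E) :
    condKernel K p y y ≤ K y y := by
  have := div_nonneg (mul_self_nonneg (K y p)) (kernel_self_nonneg hK p)
  rw [condKernel, kernel_comm hK p y]
  linarith

theorem detL_eq_detL_condKernel_add (K : E → E → ℝ) (p : E) {m : ℕ} (z : Fin m → E) :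
    detL K z = detL (condKernel K p) z + (K p p)⁻¹ * ((fun i ↦ K p (z i)) ⬝ᵥ
      (Matrix.of fun i j ↦ condKernel K p (z i) (z j)).adjugate *ᵥ fun i ↦ K (z i) p) := by
  have h := det_add_vecMulVec (Matrix.of fun i j ↦ condKernel K p (z i) (z j))
    (fun i ↦ K (z i) p) ((K p p)⁻¹ • fun i ↦ K p (z i))
  rw [smul_dotProduct, smul_eq_mul] at h
  rw [detL, detL, ← h]
  congr 1
  ext i j
  simp [condKernel, vecMulVec_apply]
  ring

theorem detL_condKernel_le (hK : (Matrix.of K).PosSemidef) (hp : 0 < K p p) {m : ℕ}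
    (z : Fin m → E) : detL (condKernel K p) z ≤ detL K z := by
  have hadj := posSemidef_adjugate ((posSemidef_condKernel hK hp).submatrix z)
  have hq := hadj.dotProduct_mulVec_nonneg fun i ↦ K (z i) p
  rw [detL_eq_detL_condKernel_add K p]
  simp only [kernel_comm hK p]
  exact le_add_of_nonneg_right (mul_nonneg (inv_nonneg.mpr hp.le) hq)

theorem detL_cons_eq_zero (hK : (Matrix.of K).PosSemidef) (hp : K p p = 0) {m : ℕ}
    (w : Fin m → E) : detL K (Fin.cons p w : Fin (m + 1) → E) = 0 := by
  have hM := hK.submatrix (Fin.cons p w : Fin (m + 1) → E)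
  refine exists_mulVec_eq_zero_iff.mp ⟨Pi.single 0 1, by simp, ?_⟩
  refine (hM.dotProduct_mulVec_zero_iff _).mp ?_
  simp [hp]

theorem detL_cons_le (hK : (Matrix.of K).PosSemidef) (p : E) {m : ℕ} (w : Fin m → E) :
    detL K (Fin.cons p w : Fin (m + 1) → E) ≤ K p p * detL K w := by
  rcases (kernel_self_nonneg hK p).eq_or_lt' with hp | hp
  · rw [detL_cons_eq_zero hK hp, hp, zero_mul]
  · rw [detL_cons hp.ne']
    gcongr
    exact detL_condKernel_le hK hp w

theorem detL_le_prod (hK : (Matrix.of K).PosSemidef) {m : ℕ} (x : Fin m → E) :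
    detL K x ≤ ∏ i, K (x i) (x i) := by
  induction x using Fin.consInduction with
  | elim0 => simp [detL]
  | cons p w ih =>
    rw [Fin.prod_univ_succ]
    exact (detL_cons_le hK p w).trans (mul_le_mul_of_nonneg_left ih (kernel_self_nonneg hK p))

theorem adjugate_self_eq_detL_removeNth (K : E → E → ℝ) {n : ℕ} (z : Fin (n + 1) → E)
    (j : Fin (n + 1)) :
    (Matrix.of fun i j ↦ K (z i) (z j)).adjugate j j = detL K (j.removeNth z) := by
  rw [adjugate_fin_succ_eq_det_submatrix, (Even.add_self (j : ℕ)).neg_one_pow, one_mul]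
  rfl

theorem detL_le_sum_removeNth (hK : (Matrix.of K).PosSemidef) {n : ℕ} (z : Fin (n + 1) → E) :
    detL K z ≤ ∑ j, K (z j) (z j) * detL K (j.removeNth z) := by
  calc detL K z = detL K (Fin.cons (z 0) (Fin.removeNth 0 z) : Fin (n + 1) → E) := by
        rw [Fin.removeNth_zero, Fin.cons_self_tail]
    _ ≤ K (z 0) (z 0) * detL K (Fin.removeNth 0 z) := detL_cons_le hK _ _
    _ ≤ ∑ j, K (z j) (z j) * detL K (j.removeNth z) :=
        Finset.single_le_sum (f := fun j ↦ K (z j) (z j) * detL K (j.removeNth z))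
          (fun j _ ↦ mul_nonneg (kernel_self_nonneg hK _) (detL_nonneg hK _)) (Finset.mem_univ 0)

theorem detL_le_sum_condKernel (hK : (Matrix.of K).PosSemidef) (hp : 0 < K p p) {n : ℕ}
    (z : Fin (n + 1) → E) :
    detL K z ≤ (n + 1) * ∑ j, K (z j) (z j) * detL (condKernel K p) (j.removeNth z) := by
  have hR := posSemidef_condKernel hK hp
  have hdet : detL (condKernel K p) z ≤
      (n + 1) * ∑ j, condKernel K p (z j) (z j) * detL (condKernel K p) (j.removeNth z) := by
    have h := detL_le_sum_removeNth hR z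
    exact h.trans (le_mul_of_one_le_left ((detL_nonneg hR z).trans h) (by simp))
  have hadj : (Matrix.of fun i j ↦ condKernel K p (z i) (z j)).adjugate.PosSemidef :=
    posSemidef_adjugate (hR.submatrix z)
  have hquad := dotProduct_mulVec_le_card_mul_sum hadj fun i ↦ K p (z i)
  have hcond (j : Fin (n + 1)) :
      condKernel K p (z j) (z j) = K (z j) (z j) - (K p p)⁻¹ * K p (z j) ^ 2 := by
    rw [condKernel, kernel_comm hK _ p]
    ring
  calc detL K z
      ≤ (n + 1) * (∑ j, condKernel K p (z j) (z j) * detL (condKernel K p) (j.removeNth z)) +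
        (K p p)⁻¹ * ((n + 1) * ∑ j, K p (z j) ^ 2 * detL (condKernel K p) (j.removeNth z)) := by
        rw [detL_eq_detL_condKernel_add K p]
        gcongr
        simpa [kernel_comm hK _ p, ← adjugate_self_eq_detL_removeNth] using hquad
    _ = (n + 1) * ∑ j, K (z j) (z j) * detL (condKernel K p) (j.removeNth z) := by
        rw [mul_left_comm, ← mul_add, Finset.mul_sum _ _ (K p p)⁻¹, ← Finset.sum_add_distrib]
        congr 1
        refine Finset.sum_congr rfl fun j _ ↦ ?_
        rw [hcond]
        ring

end Kernel

section Integral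

variable {E : Type*} [MeasurableSpace E] {K : E → E → ℝ} {p : E}

theorem measurable_kernel_self (hKm : Measurable fun q : E × E ↦ K q.1 q.2) :
    Measurable fun y ↦ K y y :=
  hKm.comp (measurable_id.prodMk measurable_id)

theorem measurable_condKernel (hKm : Measurable fun q : E × E ↦ K q.1 q.2) (p : E) :
    Measurable fun q : E × E ↦ condKernel K p q.1 q.2 :=
  hKm.sub (((hKm.comp (measurable_fst.prodMk measurable_const)).mul
    (hKm.comp (measurable_const.prodMk measurable_snd))).div_const _)

theorem measurable_detL (hKm : Measurable fun q : E × E ↦ K q.1 q.2) (m : ℕ) :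
    Measurable fun x : Fin m → E ↦ detL K x := by
  simp only [detL, det_apply, Matrix.of_apply]
  have hpair (i j : Fin m) : Measurable fun x : Fin m → E ↦ (x i, x j) := by fun_prop
  have hentry (i j : Fin m) : Measurable fun x : Fin m → E ↦ K (x i) (x j) :=
    hKm.comp (hpair i j)
  exact Finset.measurable_sum _ fun σ _ ↦
    (Finset.measurable_prod _ fun i _ ↦ hentry _ _).const_smul _

theorem integrable_detL (μ : Measure E) [SigmaFinite μ] (hK : (Matrix.of K).PosSemidef)
    (hKm : Measurable fun q : E × E ↦ K q.1 q.2) (hKi : Integrable (fun y ↦ K y y) μ) (m : ℕ) :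
    Integrable (fun x : Fin m → E ↦ detL K x) (Measure.pi fun _ ↦ μ) := by
  have hprod : Integrable (fun x : Fin m → E ↦ ∏ i, K (x i) (x i)) (Measure.pi fun _ ↦ μ) :=
    Integrable.fintype_prod (f := fun _ y ↦ K y y) fun _ ↦ hKi
  refine hprod.mono' (measurable_detL hKm m).aestronglyMeasurable (.of_forall fun x ↦ ?_)
  rw [Real.norm_of_nonneg (detL_nonneg hK x)]
  exact detL_le_prod hK x

theorem integrable_condKernel_self {μ : Measure E} (hK : (Matrix.of K).PosSemidef)
    (hKm : Measurable fun q : E × E ↦ K q.1 q.2) (hKi : Integrable (fun y ↦ K y y) μ)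
    (hp : 0 < K p p) : Integrable (fun y ↦ condKernel K p y y) μ := by
  refine hKi.mono' (measurable_kernel_self (measurable_condKernel hKm p)).aestronglyMeasurable
    (.of_forall fun y ↦ ?_)
  rw [Real.norm_of_nonneg (kernel_self_nonneg (posSemidef_condKernel hK hp) y)]
  exact condKernel_self_le hK p y

section RemoveNth

variable {μ : Measure E} [SigmaFinite μ] {n : ℕ}

theorem integrable_mul_removeNth {f : E → ℝ} {g : (Fin n → E) → ℝ} (hf : Integrable f μ)
    (hg : Integrable g (Measure.pi fun _ ↦ μ)) (j : Fin (n + 1)) :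
    Integrable (fun z : Fin (n + 1) → E ↦ f (z j) * g (j.removeNth z)) (Measure.pi fun _ ↦ μ) :=
  (measurePreserving_piFinSuccAbove (fun _ ↦ μ) j).integrable_comp_of_integrable (hf.mul_prod hg)

theorem integral_mul_removeNth (f : E → ℝ) (g : (Fin n → E) → ℝ) (j : Fin (n + 1)) :
    ∫ z : Fin (n + 1) → E, f (z j) * g (j.removeNth z) ∂(Measure.pi fun _ ↦ μ) =
      (∫ y, f y ∂μ) * ∫ w, g w ∂(Measure.pi fun _ ↦ μ) := by
  rw [← integral_prod_mul]
  exact (measurePreserving_piFinSuccAbove (fun _ ↦ μ) j).integral_comp'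
    fun q : E × (Fin n → E) ↦ f q.1 * g q.2

end RemoveNth

theorem integral_detL_succ_le (μ : Measure E) [SigmaFinite μ] (hK : (Matrix.of K).PosSemidef)
    (hKm : Measurable fun q : E × E ↦ K q.1 q.2) (hKi : Integrable (fun y ↦ K y y) μ)
    (hp : 0 < K p p) (n : ℕ) :
    ∫ z : Fin (n + 1) → E, detL K z ∂(Measure.pi fun _ ↦ μ) ≤
      (n + 1) ^ 2 * ((∫ y, K y y ∂μ) *
        ∫ w : Fin n → E, detL (condKernel K p) w ∂(Measure.pi fun _ ↦ μ)) := by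
  have hRi := integrable_detL μ (posSemidef_condKernel hK hp) (measurable_condKernel hKm p)
    (integrable_condKernel_self hK hKm hKi hp) n
  have hterm := integrable_mul_removeNth hKi hRi
  calc ∫ z : Fin (n + 1) → E, detL K z ∂(Measure.pi fun _ ↦ μ)
      ≤ ∫ z : Fin (n + 1) → E, (n + 1) *
          ∑ j, K (z j) (z j) * detL (condKernel K p) (j.removeNth z) ∂(Measure.pi fun _ ↦ μ) :=
        integral_mono (integrable_detL μ hK hKm hKi _)
          ((integrable_finsetSum _ fun j _ ↦ hterm j).const_mul _)
          (detL_le_sum_condKernel hK hp)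
    _ = (n + 1) ^ 2 * ((∫ y, K y y ∂μ) *
          ∫ w : Fin n → E, detL (condKernel K p) w ∂(Measure.pi fun _ ↦ μ)) := by
        rw [integral_const_mul, integral_finsetSum _ fun j _ ↦ hterm j]
        simp only [integral_mul_removeNth (fun y ↦ K y y)]
        rw [Fin.sum_const, nsmul_eq_mul]
        push_cast
        ring

end Integral

section Greedy

variable {E : Type*} {K : E → E → ℝ} {k : ℕ}

theorem prefixTuple_succ (x : Fin (k + 1) → E) (m : ℕ) (h : m ≤ k) :
    prefixTuple x (m + 1) (Nat.succ_le_succ h) =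
      (Fin.cons (x 0) (prefixTuple (Fin.tail x) m h) : Fin (m + 1) → E) := by
  ext i
  refine Fin.cases rfl (fun _ ↦ rfl) i

variable [MeasurableSpace E]

/-- The density, with respect to powers of the reference measure `μ`, of the ordered output of the
greedy algorithm that draws each point from the conditional density of the kernel `K` given the
points already drawn. A normalizing integral that vanishes or diverges makes it `0`. -/
noncomputable def greedyDensity (μ : Measure E) (K : E → E → ℝ) (x : Fin k → E) : ℝ :=
  ∏ i : Fin k, detL K (prefixTuple x (i.1 + 1) i.isLt) /
    ∫ y, detL K (Fin.snoc (prefixTuple x i.1 i.isLt.le) y : Fin (i.1 + 1) → E) ∂μ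

theorem greedyDensity_nonneg (μ : Measure E) (hK : (Matrix.of K).PosSemidef) (x : Fin k → E) :
    0 ≤ greedyDensity μ K x :=
  Finset.prod_nonneg fun _ _ ↦
    div_nonneg (detL_nonneg hK _) (integral_nonneg fun _ ↦ detL_nonneg hK _)

theorem greedyDensity_eq_zero (μ : Measure E) (x : Fin (k + 1) → E) (hx : K (x 0) (x 0) = 0) :
    greedyDensity μ K x = 0 := by
  refine Finset.prod_eq_zero (Finset.mem_univ 0) ?_
  have hnum : detL K (prefixTuple x ((0 : Fin (k + 1)).1 + 1) (Fin.isLt 0)) = 0 :=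
    (detL_one K _).trans hx
  rw [hnum, zero_div]

theorem greedyDensity_succ (μ : Measure E) (x : Fin (k + 1) → E) (hx : K (x 0) (x 0) ≠ 0) :
    greedyDensity μ K x = K (x 0) (x 0) / (∫ y, K y y ∂μ) *
      greedyDensity μ (condKernel K (x 0)) (Fin.tail x) := by
  rw [greedyDensity, Fin.prod_univ_succ]
  congr 1
  · congr 1
    · exact detL_one K _
    · exact integral_congr_ae (.of_forall fun y ↦ detL_one K _)
  · refine Finset.prod_congr rfl fun i _ ↦ ?_
    have hnum : detL K (prefixTuple x (i.succ.1 + 1) i.succ.isLt) = K (x 0) (x 0) *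
        detL (condKernel K (x 0)) (prefixTuple (Fin.tail x) (i.1 + 1) i.isLt) := by
      rw [← detL_cons hx, ← prefixTuple_succ]
      rfl
    have hden (y : E) : detL K (Fin.snoc (prefixTuple x i.succ.1 i.succ.isLt.le) y :
          Fin (i.succ.1 + 1) → E) = K (x 0) (x 0) * detL (condKernel K (x 0))
        (Fin.snoc (prefixTuple (Fin.tail x) i.1 i.isLt.le) y : Fin (i.1 + 1) → E) := by
      rw [← detL_cons hx, Fin.cons_snoc_eq_snoc_cons, ← prefixTuple_succ]
      rfl
    simp only [hnum, hden, integral_const_mul, mul_div_mul_left _ _ hx]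

theorem greedyDensity_mul_integral_detL_le (μ : Measure E) [SigmaFinite μ]
    (hK : (Matrix.of K).PosSemidef) (hKm : Measurable fun q : E × E ↦ K q.1 q.2)
    (x : Fin k → E) :
    greedyDensity μ K x * ∫ z : Fin k → E, detL K z ∂(Measure.pi fun _ ↦ μ) ≤
      (k.factorial : ℝ) ^ 2 * detL K x := by
  induction k generalizing K with
  | zero => simp [greedyDensity, detL, Measure.real]
  | succ k ih =>
    have hbound_nonneg : 0 ≤ ((k + 1).factorial : ℝ) ^ 2 * detL K x :=
      mul_nonneg (sq_nonneg _) (detL_nonneg hK x)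
    by_cases hx : K (x 0) (x 0) = 0
    · simpa [greedyDensity_eq_zero μ x hx] using hbound_nonneg
    by_cases htrace : ∫ y, K y y ∂μ = 0
    · simpa [greedyDensity_succ μ x hx, htrace] using hbound_nonneg
    have hx_pos : 0 < K (x 0) (x 0) := (kernel_self_nonneg hK _).lt_of_ne' hx
    have hKi : Integrable (fun y ↦ K y y) μ := not_imp_comm.mp integral_undef htrace
    have hR := posSemidef_condKernel hK hx_pos
    calc greedyDensity μ K x * ∫ z : Fin (k + 1) → E, detL K z ∂(Measure.pi fun _ ↦ μ)
        ≤ greedyDensity μ K x * ((k + 1) ^ 2 * ((∫ y, K y y ∂μ) *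
            ∫ w : Fin k → E, detL (condKernel K (x 0)) w ∂(Measure.pi fun _ ↦ μ))) :=
          mul_le_mul_of_nonneg_left (integral_detL_succ_le μ hK hKm hKi hx_pos k)
            (greedyDensity_nonneg μ hK x)
      _ = (k + 1) ^ 2 * K (x 0) (x 0) * (greedyDensity μ (condKernel K (x 0)) (Fin.tail x) *
            ∫ w : Fin k → E, detL (condKernel K (x 0)) w ∂(Measure.pi fun _ ↦ μ)) := by
          rw [greedyDensity_succ μ x hx]
          field_simp
      _ ≤ (k + 1) ^ 2 * K (x 0) (x 0) *
            ((k.factorial : ℝ) ^ 2 * detL (condKernel K (x 0)) (Fin.tail x)) := by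
          exact mul_le_mul_of_nonneg_left (ih hR (measurable_condKernel hKm _) _) (by positivity)
      _ = ((k + 1).factorial : ℝ) ^ 2 * detL K x := by
          rw [← Fin.cons_self_tail x, detL_cons (by simpa using hx), Nat.factorial_succ]
          push_cast
          simp only [Fin.cons_zero, Fin.tail_cons]
          ring

theorem greedy_density_bound_general (μ : Measure E) [SigmaFinite μ] {L : E → E → ℝ}
    (hL : (Matrix.of L).PosSemidef) (hLm : Measurable fun q : E × E ↦ L q.1 q.2)
    (hZ : 0 < ∫ z : Fin k → E, detL L z ∂(Measure.pi fun _ ↦ μ)) (x : Fin k → E) :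
    ∑ σ : Equiv.Perm (Fin k), greedyDensity μ L (x ∘ σ) ≤
      (k.factorial : ℝ) ^ 2 * (detL L x /
        ((1 / (k.factorial : ℝ)) * ∫ z : Fin k → E, detL L z ∂(Measure.pi fun _ ↦ μ))) := by
  have hterm (σ : Equiv.Perm (Fin k)) : greedyDensity μ L (x ∘ σ) ≤ (k.factorial : ℝ) ^ 2 *
      detL L x / ∫ z : Fin k → E, detL L z ∂(Measure.pi fun _ ↦ μ) := by
    rw [le_div_iff₀ hZ, ← detL_comp_perm L x σ]
    exact greedyDensity_mul_integral_detL_le μ hL hLm _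
  calc ∑ σ : Equiv.Perm (Fin k), greedyDensity μ L (x ∘ σ)
      ≤ ∑ _σ : Equiv.Perm (Fin k), (k.factorial : ℝ) ^ 2 * detL L x /
          ∫ z : Fin k → E, detL L z ∂(Measure.pi fun _ ↦ μ) := Finset.sum_le_sum fun σ _ ↦ hterm σ
    _ = (k.factorial : ℝ) ^ 2 * (detL L x /
          ((1 / (k.factorial : ℝ)) * ∫ z : Fin k → E, detL L z ∂(Measure.pi fun _ ↦ μ))) := by
        rw [Finset.sum_const, Finset.card_univ, Fintype.card_perm, Fintype.card_fin, nsmul_eq_mul]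
        field_simp

end Greedy

/-- **Greedy (approximate volume) sampling density bound.** Let `ν` be the output
distribution of the greedy algorithm which samples `x_{i+1}` from the conditional
distribution with density proportional to `det_L(x₁,…,x_i,y)`. Its (symmetrized)
density satisfies `f_ν(x₁,…,x_k) ≤ (k!)² · f_π(x₁,…,x_k)`, where `π` is the `k`-DPP
of `L` with partition function `Z = (1/k!)∫…∫ det_L`. -/
theorem greedy_density_bound {d k : ℕ} (hk : 1 ≤ k)
    (C : Set (EuclideanSpace ℝ (Fin d))) (hC : IsClosed C)
    (L : EuclideanSpace ℝ (Fin d) → EuclideanSpace ℝ (Fin d) → ℝ)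
    (hLcont : Continuous fun p : EuclideanSpace ℝ (Fin d) × EuclideanSpace ℝ (Fin d) =>
      L p.1 p.2)
    (hLsymm : ∀ x y, L x y = L y x)
    (hLpsd : ∀ (m : ℕ) (x : Fin m → EuclideanSpace ℝ (Fin d)),
      (Matrix.of (fun i j : Fin m => L (x i) (x j))).PosSemidef)
    (hZ : 0 < ∫ z in Set.univ.pi (fun _ : Fin k => C), detL L z)
    (x : Fin k → EuclideanSpace ℝ (Fin d)) (hx : ∀ i, x i ∈ C) :
    (∑ σ : Equiv.Perm (Fin k), ∏ i : Fin k,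
        detL L (prefixTuple (x ∘ σ) (i.1 + 1) i.isLt)
          / (∫ y in C, detL L (Fin.snoc (prefixTuple (x ∘ σ) i.1 i.isLt.le) y)))
      ≤ ((Nat.factorial k : ℝ)) ^ 2 *
          (detL L x /
            ((1 / (Nat.factorial k : ℝ)) *
              ∫ z in Set.univ.pi (fun _ : Fin k => C), detL L z)) := by
  have hL : (Matrix.of L).PosSemidef := posSemidef_of_forall_fin_submatrix hLpsd
  have hvol : (volume : Measure (Fin k → EuclideanSpace ℝ (Fin d))).restrict
      (Set.univ.pi fun _ ↦ C) = Measure.pi fun _ ↦ volume.restrict C := by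
    rw [volume_pi, Measure.restrict_pi_pi]
  rw [hvol] at hZ ⊢
  exact greedy_density_bound_general (volume.restrict C) hL hLcont.measurable hZ x
end
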